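/- Let n ≥ 3 be an odd natural number and let CL_n be the circular ladder graph on 2n vertices. Then the number of proper 3-edge-colorings of CL_n equals 2^n − 2. -/

import Mathlib

/-- The circular ladder graph `CL_n`: vertices `(ZMod n) × Bool`, with `(i,b)`
adjacent to `(j,c)` iff (`b = c` and (`j = i + 1` or `i = j + 1`)) or (`b ≠ c` and `i = j`). -/
def circularLadder (n : ℕ) : SimpleGraph (ZMod n × Bool) :=
  SimpleGraph.fromRel (fun p q =>
    (p.2 = q.2 ∧ (q.1 = p.1 + 1 ∨ p.1 = q.1 + 1)) ∨ (p.2 ≠ q.2 ∧ p.1 = q.1))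

/-- A Tait coloring (proper 3-edge-coloring): distinct edges sharing a vertex get
different colors in `ZMod 3`. -/
def IsTaitColoring {V : Type*} (G : SimpleGraph V) (C : G.edgeSet → ZMod 3) : Prop :=
  ∀ e₁ e₂ : G.edgeSet, e₁ ≠ e₂ →
    (∃ v : V, v ∈ (e₁ : Sym2 V) ∧ v ∈ (e₂ : Sym2 V)) → C e₁ ≠ C e₂

/-- The number of proper 3-edge-colorings of `G`. -/
noncomputable def numTaitColorings {V : Type*} (G : SimpleGraph V) : ℕ :=
  Nat.card {C : G.edgeSet → ZMod 3 // IsTaitColoring G C}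

/-!
Three colors in `ZMod 3` are pairwise distinct iff they sum to `0` and two of them differ. So the
difference of the colors of two parallel rail edges changes sign at each rung, and going once around
an odd ladder forces it to vanish. A Tait coloring is therefore a proper coloring of the edges of
one rail, a cycle of length `n`, and the rung colors are then determined.

Let `c n` be the number of proper `q`-colorings of the cycle of length `n`. A proper coloring of the
path with `n + 2` vertices is a coloring of the cycle of length `n + 2` if its ends differ, and of
the cycle of length `n + 1` if they agree, so `c (n + 2) + c (n + 1) = q * (q - 1) ^ (n + 1)`.
-/

/-- The proper `α`-colorings of the path with vertices `0, …, n`. -/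
def pathColorings (n : ℕ) (α : Type*) : Set (Fin (n + 1) → α) :=
  {x | ∀ i : Fin n, x i.castSucc ≠ x i.succ}

/-- The proper `α`-colorings of the cycle on `ZMod n`. For `n = 1` the cycle is a loop, which has
no proper coloring. -/
def cycleColorings (n : ℕ) (α : Type*) : Set (ZMod n → α) :=
  {x | ∀ i, x i ≠ x (i + 1)}

section PathAndCycle

variable {α : Type*} {n : ℕ}

lemma snoc_mem_pathColorings {x : Fin (n + 1) → α} {a : α} :
    (Fin.snoc x a : Fin (n + 2) → α) ∈ pathColorings (n + 1) α ↔
      x ∈ pathColorings n α ∧ a ≠ x (Fin.last n) := by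
  simp only [pathColorings, Set.mem_ofPred_eq, Fin.forall_fin_succ' (n := n), Fin.succ_castSucc,
    Fin.succ_last, Fin.snoc_castSucc, Fin.snoc_last, ne_comm]

lemma mem_cycleColorings_succ {x : Fin (n + 1) → α} :
    x ∈ cycleColorings (n + 1) α ↔ x ∈ pathColorings n α ∧ x 0 ≠ x (Fin.last n) := by
  -- `ZMod (n + 1)` is `Fin (n + 1)` by definition.
  change (∀ i : Fin (n + 1), x i ≠ x (i + 1)) ↔ _
  simp only [pathColorings, Set.mem_ofPred_eq, Fin.forall_fin_succ' (n := n), Fin.coeSucc_eq_succ,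
    Fin.last_add_one, ne_comm]

/-- A proper coloring of a path extended by one vertex is a coloring of the shorter path together
with a color different from that of its last vertex. -/
def pathColoringsSuccEquiv (n : ℕ) (α : Type*) :
    pathColorings (n + 1) α ≃ Σ x : pathColorings n α, {a : α // a ≠ x.1 (Fin.last n)} where
  toFun y :=
    have hy := snoc_mem_pathColorings.1 ((Fin.snoc_init_self y.1).symm ▸ y.2)
    ⟨⟨Fin.init y.1, hy.1⟩, y.1 (Fin.last (n + 1)), hy.2⟩
  invFun p := ⟨Fin.snoc p.1.1 p.2.1, snoc_mem_pathColorings.2 ⟨p.1.2, p.2.2⟩⟩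
  left_inv y := Subtype.ext (Fin.snoc_init_self y.1)
  right_inv p := Sigma.subtype_ext
    (Subtype.ext (Fin.init_snoc (α := fun _ ↦ α) p.2.1 p.1.1))
    (Fin.snoc_last (α := fun _ ↦ α) p.2.1 p.1.1)

lemma snoc_zero_mem_pathColorings {x : Fin (n + 1) → α} :
    (Fin.snoc x (x 0) : Fin (n + 2) → α) ∈ pathColorings (n + 1) α ↔
      x ∈ cycleColorings (n + 1) α := by
  rw [snoc_mem_pathColorings, mem_cycleColorings_succ]

lemma pathColorings_inter_zero_eq_last :
    pathColorings (n + 1) α ∩ {y | y 0 = y (Fin.last (n + 1))} =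
      (fun x : Fin (n + 1) → α ↦ (Fin.snoc x (x 0) : Fin (n + 2) → α)) ''
        cycleColorings (n + 1) α := by
  refine Set.Subset.antisymm ?_ ?_
  · rintro y ⟨hy, h0⟩
    have snoc_init : Fin.snoc (Fin.init y) (Fin.init y 0) = y := by
      rw [show Fin.init y 0 = y (Fin.last (n + 1)) from h0, Fin.snoc_init_self]
    exact ⟨Fin.init y, snoc_zero_mem_pathColorings.1 (snoc_init.symm ▸ hy), snoc_init⟩
  · rintro _ ⟨x, hx, rfl⟩
    exact ⟨snoc_zero_mem_pathColorings.2 hx, by simp⟩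

variable [Finite α]

lemma ncard_pathColorings_succ :
    (pathColorings (n + 1) α).ncard = (pathColorings n α).ncard * (Nat.card α - 1) := by
  have card_ne (b : α) : Nat.card {a : α // a ≠ b} = Nat.card α - 1 :=
    (Set.ncard_compl {b}).trans (by rw [Set.ncard_singleton])
  have := Fintype.ofFinite (pathColorings n α)
  rw [← Nat.card_coe_set_eq, Nat.card_congr (pathColoringsSuccEquiv n α), Nat.card_sigma]
  simp only [card_ne, Finset.sum_const, Finset.card_univ, smul_eq_mul, ← Nat.card_eq_fintype_card,
    Nat.card_coe_set_eq]

lemma ncard_pathColorings (n : ℕ) (α : Type*) [Finite α] :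
    (pathColorings n α).ncard = Nat.card α * (Nat.card α - 1) ^ n := by
  induction n with
  | zero => simp [pathColorings, Set.ncard_univ, Nat.card_fun]
  | succ n ih => rw [ncard_pathColorings_succ, ih, pow_succ, mul_assoc]

lemma ncard_cycleColorings_add_succ :
    (cycleColorings (n + 1) α).ncard + (cycleColorings (n + 2) α).ncard =
      (pathColorings (n + 1) α).ncard := by
  have injective_snoc_zero : Function.Injective
      fun x : Fin (n + 1) → α ↦ (Fin.snoc x (x 0) : Fin (n + 2) → α) :=
    fun _ _ h ↦ (Fin.snoc_inj.1 h).1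
  have open_eq : cycleColorings (n + 2) α =
      pathColorings (n + 1) α \ {y | y 0 = y (Fin.last (n + 1))} := by
    ext x
    exact mem_cycleColorings_succ
  have closed_ncard : (cycleColorings (n + 1) α).ncard =
      (pathColorings (n + 1) α ∩ {y | y 0 = y (Fin.last (n + 1))}).ncard := by
    rw [pathColorings_inter_zero_eq_last]
    exact (Set.ncard_image_of_injective _ injective_snoc_zero).symm
  rw [closed_ncard, open_eq]
  exact Set.ncard_inter_add_ncard_sdiff_eq_ncard _ _

theorem ncard_cycleColorings (n : ℕ) [NeZero n] (α : Type*) [Finite α] :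
    ((cycleColorings n α).ncard : ℤ) =
      (Nat.card α - 1) ^ n + (-1) ^ n * (Nat.card α - 1) := by
  obtain ⟨n, rfl⟩ := Nat.exists_eq_add_one_of_ne_zero (NeZero.ne n)
  induction n with
  | zero =>
    have no_loop_coloring : cycleColorings 1 α = ∅ :=
      Set.eq_empty_of_forall_notMem fun x hx ↦ (mem_cycleColorings_succ.1 hx).2 rfl
    simp [no_loop_coloring]
  | succ n ih =>
    have recurrence :
        ((cycleColorings (n + 1) α).ncard : ℤ) + (cycleColorings (n + 2) α).ncard =
          Nat.card α * (Nat.card α - 1) ^ (n + 1) := by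
      rw [← Nat.cast_add, ncard_cycleColorings_add_succ, ncard_pathColorings]
      obtain card_eq | card_pos := Nat.eq_zero_or_pos (Nat.card α)
      · simp [card_eq]
      · rw [Nat.cast_mul, Nat.cast_pow, Nat.cast_pred card_pos]
    linear_combination recurrence - ih

end PathAndCycle

/-- The edges of `CL_n`: the rung `i` joins `(i, false)` to `(i, true)`, and the rail edge `i b`
joins `(i, b)` to `(i + 1, b)`. -/
inductive LadderEdge (n : ℕ)
  | rung (i : ZMod n)
  | rail (i : ZMod n) (b : Bool)

namespace LadderEdge

variable {n : ℕ}

/-- The pair of endpoints of an edge of `CL_n`. -/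
def toSym2 : LadderEdge n → Sym2 (ZMod n × Bool)
  | rung i => s((i, false), (i, true))
  | rail i b => s((i, b), (i + 1, b))

lemma mem_toSym2_iff {i : ZMod n} {b : Bool} {k : LadderEdge n} :
    (i, b) ∈ k.toSym2 ↔ k = rung i ∨ k = rail i b ∨ k = rail (i - 1) b := by
  cases k with
  | rung j => cases b <;> simp [toSym2, eq_comm]
  | rail j c => simp [toSym2, eq_sub_iff_add_eq, ← or_and_right, eq_comm]

lemma toSym2_injective (hn : 3 ≤ n) : Function.Injective (toSym2 (n := n)) := by
  have two_ne : (2 : ZMod n) ≠ 0 := fun h ↦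
    absurd (Nat.le_of_dvd two_pos ((ZMod.natCast_eq_zero_iff 2 n).1 (by exact_mod_cast h)))
      (by omega)
  rintro (i | ⟨i, b⟩) (j | ⟨j, c⟩) h
  · simp_all [toSym2]
  · cases c <;> simp [toSym2] at h
  · cases b <;> simp [toSym2] at h
  · simp only [toSym2, Sym2.eq_iff, Prod.mk.injEq] at h
    obtain ⟨⟨hij, hbc⟩, -⟩ | ⟨⟨hij, -⟩, hji, -⟩ := h
    · rw [hij, hbc]
    · exact absurd (by linear_combination hji - hij) two_ne

lemma mem_range_toSym2 {i j : ZMod n} {b c : Bool}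
    (h : (b = c ∧ (j = i + 1 ∨ i = j + 1)) ∨ (b ≠ c ∧ i = j)) :
    s((i, b), (j, c)) ∈ Set.range (toSym2 (n := n)) := by
  obtain ⟨rfl, rfl | rfl⟩ | ⟨hbc, rfl⟩ := h
  · exact ⟨rail i b, rfl⟩
  · exact ⟨rail j b, Sym2.eq_swap⟩
  · exact ⟨rung i, by cases b <;> cases c <;> simp_all [toSym2]⟩

lemma range_toSym2 (hn : 2 ≤ n) : Set.range (toSym2 (n := n)) = (circularLadder n).edgeSet := by
  have : Fact (1 < n) := ⟨hn⟩
  refine Set.Subset.antisymm ?_ fun e he ↦ ?_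
  · rintro _ ⟨i | ⟨i, b⟩, rfl⟩ <;> simp [toSym2, circularLadder]
  · induction e using Sym2.ind with | _ p q
    rw [SimpleGraph.mem_edgeSet, circularLadder, SimpleGraph.fromRel_adj] at he
    obtain ⟨-, h | h⟩ := he
    · exact mem_range_toSym2 h
    · exact Sym2.eq_swap ▸ mem_range_toSym2 h

/-- For `3 ≤ n` the edges of `CL_n` are listed by `LadderEdge n` without repetition. -/
noncomputable def equivEdgeSet (hn : 3 ≤ n) : LadderEdge n ≃ (circularLadder n).edgeSet :=
  (Equiv.ofInjective toSym2 (toSym2_injective hn)).trans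
    (Equiv.setCongr (range_toSym2 (by omega)))

lemma coe_equivEdgeSet (hn : 3 ≤ n) (k : LadderEdge n) :
    (equivEdgeSet hn k : Sym2 (ZMod n × Bool)) = k.toSym2 := rfl

end LadderEdge

section TaitColorings

open LadderEdge

lemma isTaitColoring_iff_injOn {V ι : Type*} {G : SimpleGraph V} {C : G.edgeSet → ZMod 3}
    (e : ι ≃ G.edgeSet) :
    IsTaitColoring G C ↔ ∀ v, Set.InjOn (C ∘ e) {k | v ∈ (e k : Sym2 V)} := by
  refine ⟨fun h v k₁ h₁ k₂ h₂ hC ↦ ?_, fun h ↦ ?_⟩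
  · by_contra hne
    exact h (e k₁) (e k₂) (e.injective.ne hne) ⟨v, h₁, h₂⟩ hC
  · refine e.forall_congr_right.1 fun k₁ ↦ e.forall_congr_right.1 fun k₂ ↦ ?_
    rintro hne ⟨v, h₁, h₂⟩ hC
    exact hne (congrArg e (h v h₁ h₂ hC))

lemma injOn_triple_iff {α β : Type*} {f : α → β} {a b c : α} (hab : a ≠ b) (hac : a ≠ c)
    (hbc : b ≠ c) : Set.InjOn f {a, b, c} ↔ f a ≠ f b ∧ f a ≠ f c ∧ f b ≠ f c := by
  rw [Set.injOn_insert (by simp [hab, hac]), Set.injOn_pair]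
  simp only [hbc, Set.image_pair, Set.mem_insert_iff, Set.mem_singleton_iff]
  tauto

variable {n : ℕ}

/-- `c` gives distinct colors to the three edges at each vertex of `CL_n`. -/
def IsLadderColoring {α : Type*} (c : LadderEdge n → α) : Prop :=
  ∀ i b, c (rung i) ≠ c (rail i b) ∧ c (rung i) ≠ c (rail (i - 1) b) ∧
    c (rail i b) ≠ c (rail (i - 1) b)

lemma isTaitColoring_iff_isLadderColoring (hn : 3 ≤ n)
    {C : (circularLadder n).edgeSet → ZMod 3} :
    IsTaitColoring (circularLadder n) C ↔ IsLadderColoring (C ∘ equivEdgeSet hn) := by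
  have : Fact (1 < n) := ⟨by omega⟩
  have edges_at (i : ZMod n) (b : Bool) :
      {k | (i, b) ∈ (equivEdgeSet hn k : Sym2 (ZMod n × Bool))} =
        {rung i, rail i b, rail (i - 1) b} := by
    ext k
    rw [Set.mem_ofPred_eq, coe_equivEdgeSet, mem_toSym2_iff]
    rfl
  rw [isTaitColoring_iff_injOn (equivEdgeSet hn), Prod.forall]
  refine forall₂_congr fun i b ↦ ?_
  rw [edges_at]
  exact injOn_triple_iff (by simp) (by simp) (by simp [eq_sub_iff_add_eq])

/-- Tait colorings of `CL_n`, read as colorings of `LadderEdge n`. -/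
noncomputable def taitColoringEquiv (hn : 3 ≤ n) :
    {C : (circularLadder n).edgeSet → ZMod 3 // IsTaitColoring (circularLadder n) C} ≃
      {c : LadderEdge n → ZMod 3 // IsLadderColoring c} :=
  ((equivEdgeSet hn).symm.arrowCongr (Equiv.refl _)).subtypeEquiv fun _ ↦
    isTaitColoring_iff_isLadderColoring hn

lemma pairwise_ne_iff_add_eq_zero (a b c : ZMod 3) :
    a ≠ b ∧ a ≠ c ∧ b ≠ c ↔ a + b + c = 0 ∧ b ≠ c := by
  decide +revert

lemma isLadderColoring_iff {c : LadderEdge n → ZMod 3} :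
    IsLadderColoring c ↔ ∀ i b,
      c (rung i) + c (rail i b) + c (rail (i - 1) b) = 0 ∧ c (rail i b) ≠ c (rail (i - 1) b) :=
  forall₂_congr fun _ _ ↦ pairwise_ne_iff_add_eq_zero _ _ _

lemma antiperiodic_eq_zero_of_odd {A : Type*} [AddMonoid A] {a : A} {m : ℕ} (hn : Odd n)
    (ha : n • a = 0) (hm : Odd m) {f : A → ZMod m} (hf : Function.Antiperiodic f a) : f = 0 := by
  obtain ⟨k, rfl⟩ := hn
  funext x
  by_contra hx
  have self_eq_neg : f x = -f x := by simpa [ha] using hf.odd_nsmul_antiperiodic k x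
  exact ZMod.ne_neg_self hm hx self_eq_neg

lemma IsLadderColoring.rail_eq_rail (hn : Odd n) {c : LadderEdge n → ZMod 3}
    (hc : IsLadderColoring c) (i : ZMod n) (b b' : Bool) : c (rail i b) = c (rail i b') := by
  have anti : Function.Antiperiodic (fun i ↦ c (rail i b) - c (rail i b')) 1 := fun i ↦ by
    have h := (isLadderColoring_iff.1 hc (i + 1) b).1
    have h' := (isLadderColoring_iff.1 hc (i + 1) b').1
    rw [add_sub_cancel_right] at h h'
    linear_combination h - h'
  exact sub_eq_zero.1 (congrFun (antiperiodic_eq_zero_of_odd hn (by simp) (by decide) anti) i)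

/-- For odd `n`, a proper coloring of the edges of `CL_n` is determined by its restriction `x` to
one rail: the rung `i` gets the third color `-(x i + x (i - 1))`. -/
def ladderColoringEquiv (hn : Odd n) :
    {c : LadderEdge n → ZMod 3 // IsLadderColoring c} ≃ cycleColorings n (ZMod 3) where
  toFun c := ⟨fun i ↦ c.1 (rail i true), fun i ↦ by
    simpa using (c.2 (i + 1) true).2.2.symm⟩
  invFun x := ⟨fun
    | rung i => -(x.1 i + x.1 (i - 1))
    | rail i _ => x.1 i, isLadderColoring_iff.2 fun i b ↦
      ⟨by ring, by simpa using (x.2 (i - 1)).symm⟩⟩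
  left_inv c := by
    ext (i | ⟨i, b⟩)
    · linear_combination -(isLadderColoring_iff.1 c.2 i true).1
    · exact c.2.rail_eq_rail hn i true b
  right_inv _ := rfl

end TaitColorings

/-- For odd `n ≥ 3`, the circular ladder graph `CL_n` has exactly `2 ^ n - 2`
proper 3-edge-colorings. -/
theorem numTaitColorings_circularLadder_odd (n : ℕ) (hn : 3 ≤ n) (hpar : Odd n) :
    numTaitColorings (circularLadder n) = 2 ^ n - 2 := by
  have : NeZero n := ⟨by omega⟩
  have card_eq : numTaitColorings (circularLadder n) = (cycleColorings n (ZMod 3)).ncard :=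
    Nat.card_congr ((taitColoringEquiv hn).trans (ladderColoringEquiv hpar))
  have two_le_pow : 2 ≤ 2 ^ n := le_self_pow₀ one_le_two (NeZero.ne n)
  zify [two_le_pow]
  rw [card_eq, ncard_cycleColorings, hpar.neg_one_pow, Nat.card_zmod]
  push_cast
  ring
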